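/- Define t_n(x) = Σ_{k=0}^n C(n,k)*C(x,k)*C(x+k,k)*2^k. For any odd prime p and p-adic integer x with 2x ≡ −1 (mod p), Σ_{n=0}^{p-1} (n+1)·t_n(x)^2 ≡ p/4 + (3/8)·(−1/p) (mod p^2), where (−1/p) = (−1)^((p−1)/2). -/

import Mathlib

/-!
With `u = t_{j+1}` and `v = t_j`, the recurrences in `n` make the sums over `n < N` of
`(2j+3) u_n² + (2j+1) v_n²` and `(4n + 2 + 2(j+1)²) (u_n² - v_n²)` telescope to `N²` times a
quadratic form in the values at `N` and `N - 1`. Taking `N = p` gives recurrences in `j` modulo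
`p²`.

At `j = r = (p-1)/2` the first recurrence only controls `p ∑ t_n(j)²`, so it is needed modulo `p³`.
Put `H_j = (-1)^j (2j+1) ∑_{n<p} t_n(j)² - p`. Modulo `p`, the quadratic form is invariant under
`j ↦ p - 2 - j`, because `t_n(j) ≡ t_n(p-1-j)`; hence `H_j + H_{p-1-j}` is constant modulo `p³`. At
`j = 0` it vanishes, as `t_n(p-1)` satisfies a first-order recurrence modulo `p³`. So `2 H_r ≡ 0`.

For `p`-adic `x`, `t_n(x)` depends on `x` only through `x(x+1)`, and
`4(x(x+1) - r(r+1)) = (2x+1)² - p²`.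
-/

/-- Generalized binomial coefficient `C(x, k) = x(x-1)⋯(x-k+1)/k!` in `ℚ_[p]`. -/
noncomputable def gbinom {p : ℕ} [Fact p.Prime] (x : ℚ_[p]) (k : ℕ) : ℚ_[p] :=
  (∏ i ∈ Finset.range k, (x - i)) / (k.factorial : ℚ_[p])

/-- The sequence `t_n(x) = ∑_{k=0}^n C(n,k) C(x,k) C(x+k,k) 2^k`. -/
noncomputable def tseq {p : ℕ} [Fact p.Prime] (x : ℚ_[p]) (n : ℕ) : ℚ_[p] :=
  ∑ k ∈ Finset.range (n+1), (n.choose k : ℚ_[p]) * gbinom x k * gbinom (x + (k : ℚ_[p])) k * 2^k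

section BinomTransform

variable {R : Type*} [CommRing R]

/-- The binomial transform `f ↦ (n ↦ ∑ k ≤ n, C(n,k) f k)`, as a linear endomorphism of the space of
sequences. It is used to turn recurrences in `k` into recurrences in `n`. -/
def binomTransform : (ℕ → R) →ₗ[R] ℕ → R where
  toFun f n := ∑ k ∈ Finset.range (n + 1), (n.choose k : R) * f k
  map_add' f g := by
    ext n
    simp only [Pi.add_apply, mul_add, Finset.sum_add_distrib]
  map_smul' c f := by
    ext n
    simp only [Pi.smul_apply, smul_eq_mul, RingHom.id_apply, Finset.mul_sum, mul_left_comm]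

theorem binomTransform_apply (f : ℕ → R) (n : ℕ) :
    binomTransform f n = ∑ k ∈ Finset.range (n + 1), (n.choose k : R) * f k :=
  rfl

theorem binomTransform_succ (f : ℕ → R) (n : ℕ) :
    binomTransform f (n + 1) = binomTransform f n + binomTransform (fun k => f (k + 1)) n := by
  have extend : ∑ k ∈ Finset.range (n + 1), (n.choose k : R) * f k =
      ∑ k ∈ Finset.range (n + 2), (n.choose k : R) * f k := by
    simp [Finset.sum_range_succ _ (n + 1)]
  simp only [binomTransform_apply]
  rw [extend, Finset.sum_range_succ', Finset.sum_range_succ' _ (n + 1)]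
  simp only [Nat.choose_succ_succ, Nat.cast_add, add_mul, Finset.sum_add_distrib,
    Nat.choose_zero_right]
  ring

/-- At `n = 0` both sides vanish, so the truncated `n - 1` is harmless. -/
theorem mul_binomTransform_sub_pred (f : ℕ → R) (n : ℕ) :
    (n : R) * (binomTransform f n - binomTransform f (n - 1)) =
      binomTransform (fun k => (k : R) * f k) n := by
  rcases n with _ | n
  · simp [binomTransform_apply]
  rw [Nat.add_sub_cancel, binomTransform_succ f n, add_sub_cancel_left]
  simp only [binomTransform_apply]
  rw [Finset.sum_range_succ' _ (n + 1), Finset.mul_sum]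
  simp only [Nat.cast_zero, zero_mul, mul_zero, add_zero]
  refine Finset.sum_congr rfl fun k _ => ?_
  have absorb : ((n + 1 : ℕ) : R) * n.choose k = (n + 1).choose (k + 1) * ((k + 1 : ℕ) : R) := by
    exact_mod_cast congrArg (Nat.cast (R := R)) (Nat.add_one_mul_choose_eq n k)
  rw [← mul_assoc, ← mul_assoc, absorb]

theorem binomTransform_pow (x : R) (n : ℕ) :
    binomTransform (fun k => x ^ k) n = (x + 1) ^ n := by
  simp [binomTransform_apply, add_pow, mul_comm]

theorem dvd_binomTransform {m : R} {f : ℕ → R} {n : ℕ} (h : ∀ k ≤ n, m ∣ f k) :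
    m ∣ binomTransform f n :=
  Finset.dvd_sum fun k hk => (h k (Finset.mem_range_succ_iff.1 hk)).mul_left _

end BinomTransform

theorem norm_binomTransform_le {R : Type*} [NormedCommRing R] [NormOneClass R]
    [IsUltrametricDist R] {f : ℕ → R} {n : ℕ} {c : ℝ} (hf : ∀ k ≤ n, ‖f k‖ ≤ c) :
    ‖binomTransform f n‖ ≤ c := by
  have hc : 0 ≤ c := (norm_nonneg _).trans (hf n le_rfl)
  rw [binomTransform_apply]
  refine IsUltrametricDist.norm_sum_le_of_forall_le_of_nonneg hc fun k hk => ?_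
  have choose_le : ‖(n.choose k : R)‖ ≤ 1 := IsUltrametricDist.norm_natCast_le_one R _
  exact (norm_mul_le_of_le choose_le (hf k (Finset.mem_range_succ_iff.1 hk))).trans_eq (one_mul c)

section Telescoping

variable {R : Type*} [CommRing R] {x : R} {a d : ℕ → R}

theorem sum_sq_add_sq_telescope (ha : ∀ n : ℕ, (n : R) * (a n - a (n - 1)) = x * d n)
    (hd : ∀ n : ℕ, (n + 1 : R) * (d (n + 1) - d n) + n * (d n - d (n - 1)) = 2 * x * a n) (N : ℕ) :
    4 * x * ∑ n ∈ Finset.range N, (x * (a n ^ 2 + d n ^ 2) + a n * d n) =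
      N ^ 2 * (4 * a (N - 1) * (a N - a (N - 1)) - (d N - d (N - 1)) ^ 2) := by
  induction N with
  | zero => simp
  | succ n ih =>
    have boundary_n : (n : R) ^ 2 * (4 * a (n - 1) * (a n - a (n - 1)) - (d n - d (n - 1)) ^ 2) =
        4 * x * d n * (n * a n - x * d n) - (n * (d n - d (n - 1))) ^ 2 := by
      linear_combination (4 * n * a (n - 1) - 4 * x * d n) * ha n
    have boundary_succ :
        (n + 1 : R) ^ 2 * (4 * a n * (a (n + 1) - a n) - (d (n + 1) - d n) ^ 2) =
          4 * x * a n * ((n + 1) * d n + x * a n) - (n * (d n - d (n - 1))) ^ 2 := by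
      have ha_succ := ha (n + 1)
      push_cast [Nat.add_sub_cancel] at ha_succ
      linear_combination (4 * (n + 1) * a n) * ha_succ +
        (2 * x * a n - (n + 1) * (d (n + 1) - d n) + n * (d n - d (n - 1))) * hd n
    rw [Finset.sum_range_succ, mul_add, ih, boundary_n, Nat.add_sub_cancel, Nat.cast_succ,
      boundary_succ]
    ring

theorem sum_mul_telescope (ha : ∀ n : ℕ, (n : R) * (a n - a (n - 1)) = x * d n)
    (hd : ∀ n : ℕ, (n + 1 : R) * (d (n + 1) - d n) + n * (d n - d (n - 1)) = 2 * x * a n) (N : ℕ) :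
    4 * x * (x ^ 2 - 1) * ∑ n ∈ Finset.range N, (4 * n + 2 + 2 * x ^ 2) * (a n * d n) =
      N ^ 2 * (4 * x * (x * (a (N - 1) ^ 2 + d N * d (N - 1)) -
          (a (N - 1) * d N + a N * d (N - 1)) + x ^ 2 * (a N - a (N - 1)) * d (N - 1)) +
        (d N - d (N - 1)) ^ 2) := by
  induction N with
  | zero => simp
  | succ n ih =>
    have boundary_n :
        (n : R) ^ 2 * (4 * x * (x * (a (n - 1) ^ 2 + d n * d (n - 1)) -
            (a (n - 1) * d n + a n * d (n - 1)) + x ^ 2 * (a n - a (n - 1)) * d (n - 1)) +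
          (d n - d (n - 1)) ^ 2) =
        4 * x * (x * ((n * a n - x * d n) ^ 2 + n ^ 2 * d n * d (n - 1)) -
            (n * d n * (n * a n - x * d n) + n ^ 2 * a n * d (n - 1)) +
            x ^ 3 * d n * n * d (n - 1)) +
          (n * (d n - d (n - 1))) ^ 2 := by
      linear_combination (-4 * x ^ 2 * (n * a (n - 1) + n * a n - x * d n) + 4 * x * n * d n +
        4 * x ^ 3 * n * d (n - 1)) * ha n
    have boundary_succ :
        (n + 1 : R) ^ 2 * (4 * x * (x * (a n ^ 2 + d (n + 1) * d n) -
            (a n * d (n + 1) + a (n + 1) * d n) + x ^ 2 * (a (n + 1) - a n) * d n) +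
          (d (n + 1) - d n) ^ 2) =
        4 * x * (x * (n + 1) ^ 2 * a n ^ 2 - (n + 1) ^ 2 * a n * d n +
            (x * (n + 1) * d n - (n + 1) * a n - x * d n + x ^ 3 * d n) *
              ((n + 1) * d n + (2 * x * a n - n * (d n - d (n - 1))))) +
          (2 * x * a n - n * (d n - d (n - 1))) ^ 2 := by
      have ha_succ := ha (n + 1)
      push_cast [Nat.add_sub_cancel] at ha_succ
      linear_combination (4 * x * (x ^ 2 - 1) * (n + 1) * d n) * ha_succ +
        (4 * x * (x * (n + 1) * d n - (n + 1) * a n - x * d n + x ^ 3 * d n) +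
          ((n + 1) * (d (n + 1) - d n) + 2 * x * a n - n * (d n - d (n - 1)))) * hd n
    rw [Finset.sum_range_succ, mul_add, ih, boundary_n, Nat.add_sub_cancel, Nat.cast_succ,
      boundary_succ]
    ring

end Telescoping

section LegendreCoeff

/-- The coefficient `C(j,k) C(j+k,k) 2^k` of `z^k` in the Legendre polynomial `P_j(1 + 4z)`, whose
binomial transform in `k` is `t_n(j)`. -/
def legendreCoeff (j k : ℕ) : ℤ :=
  j.choose k * (j + k).choose k * 2 ^ k

theorem legendreCoeff_zero_right (j : ℕ) : legendreCoeff j 0 = 1 := by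
  simp [legendreCoeff]

theorem legendreCoeff_eq_zero_of_lt {j k : ℕ} (h : j < k) : legendreCoeff j k = 0 := by
  simp [legendreCoeff, Nat.choose_eq_zero_of_lt h]

theorem intCast_choose_succ_mul (n k : ℕ) :
    (n.choose (k + 1) : ℤ) * (k + 1) = n.choose k * (n - k) := by
  rcases le_or_gt k n with h | h
  · simpa [Nat.cast_sub h] using congrArg (Nat.cast (R := ℤ)) (Nat.choose_succ_right_eq n k)
  · simp [Nat.choose_eq_zero_of_lt h, Nat.choose_eq_zero_of_lt (h.trans k.lt_succ_self)]

theorem intCast_choose_mul_succ (n k : ℕ) :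
    (n.choose k : ℤ) * (n + 1) = (n + 1).choose k * (n + 1 - k) := by
  rcases le_or_gt k (n + 1) with h | h
  · simpa [Nat.cast_sub h] using congrArg (Nat.cast (R := ℤ)) (Nat.choose_mul_succ_eq n k)
  · simp [Nat.choose_eq_zero_of_lt h, Nat.choose_eq_zero_of_lt (n.lt_succ_self.trans h)]

theorem legendreCoeff_succ_right (j k : ℕ) :
    ((k : ℤ) + 1) ^ 2 * legendreCoeff j (k + 1) =
      2 * ((j : ℤ) * (j + 1) - k * (k + 1)) * legendreCoeff j k := by
  have diagonal :
      ((j : ℤ) + k + 1) * (j + k).choose k = (j + (k + 1)).choose (k + 1) * (k + 1) := by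
    exact_mod_cast Nat.add_one_mul_choose_eq (j + k) k
  calc ((k : ℤ) + 1) ^ 2 * legendreCoeff j (k + 1)
      = (j.choose (k + 1) * (k + 1)) * ((j + (k + 1)).choose (k + 1) * (k + 1)) * 2 ^ (k + 1) := by
        rw [legendreCoeff]; ring
    _ = (j.choose k * (j - k)) * ((j + k + 1) * (j + k).choose k) * 2 ^ (k + 1) := by
        rw [intCast_choose_succ_mul, diagonal]
    _ = 2 * ((j : ℤ) * (j + 1) - k * (k + 1)) * legendreCoeff j k := by
        rw [legendreCoeff]; ring

theorem legendreCoeff_succ_left (j k : ℕ) :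
    ((j : ℤ) + 1 - k) * legendreCoeff (j + 1) k = ((j : ℤ) + 1 + k) * legendreCoeff j k := by
  have diagonal : ((j + k).choose k : ℤ) * (j + k + 1) = (j + 1 + k).choose k * (j + 1) := by
    have h := intCast_choose_mul_succ (j + k) k
    push_cast [add_right_comm j k 1] at h
    linear_combination h
  have row := intCast_choose_mul_succ j k
  have hj : ((j : ℤ) + 1) ≠ 0 := by positivity
  refine mul_left_cancel₀ hj ?_
  simp only [legendreCoeff]
  linear_combination (-(j.choose k : ℤ) * (j + 1) * 2 ^ k) * diagonal -
    ((j + 1 + k).choose k * (j + 1) * 2 ^ k : ℤ) * row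

theorem mul_legendreCoeff_add (j k : ℕ) :
    (k : ℤ) * (legendreCoeff (j + 1) k + legendreCoeff j k) =
      (j + 1) * (legendreCoeff (j + 1) k - legendreCoeff j k) := by
  linear_combination -legendreCoeff_succ_left j k

theorem succ_mul_legendreCoeff_sub (j k : ℕ) :
    ((k : ℤ) + 1) * (legendreCoeff (j + 1) (k + 1) - legendreCoeff j (k + 1)) =
      2 * (j + 1) * (legendreCoeff (j + 1) k + legendreCoeff j k) -
        2 * (k * (legendreCoeff (j + 1) k - legendreCoeff j k)) := by
  have h_succ := legendreCoeff_succ_right (j + 1) k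
  have hk : ((k : ℤ) + 1) ≠ 0 := by positivity
  refine mul_left_cancel₀ hk ?_
  push_cast at h_succ
  linear_combination h_succ - legendreCoeff_succ_right j k -
    2 * ((j : ℤ) + 1) * mul_legendreCoeff_add j k

end LegendreCoeff

section IntegerValues

/-- The integer `t_n(j)` at a natural number `j`. -/
def tInt (j : ℕ) : ℕ → ℤ :=
  binomTransform (legendreCoeff j)

theorem tInt_zero_right (j : ℕ) : tInt j 0 = 1 := by
  simp [tInt, binomTransform_apply, legendreCoeff_zero_right]

theorem tInt_zero_left (n : ℕ) : tInt 0 n = 1 := by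
  rw [tInt, binomTransform_apply, Finset.sum_range_succ']
  simp [legendreCoeff]

theorem tInt_one_left (n : ℕ) : tInt 1 n = 1 + 4 * n := by
  rcases n with _ | n
  · simp [tInt_zero_right]
  rw [tInt, binomTransform_apply, Finset.sum_range_succ', Finset.sum_range_succ',
    Finset.sum_eq_zero fun k _ => by rw [legendreCoeff_eq_zero_of_lt (by lia), mul_zero]]
  simp [legendreCoeff]
  ring

theorem mul_tInt_add_sub_pred (j n : ℕ) :
    (n : ℤ) * ((tInt (j + 1) n + tInt j n) - (tInt (j + 1) (n - 1) + tInt j (n - 1))) =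
      (j + 1) * (tInt (j + 1) n - tInt j n) := by
  have h := mul_binomTransform_sub_pred (legendreCoeff (j + 1) + legendreCoeff j) n
  have coeff : (fun k : ℕ => (k : ℤ) * (legendreCoeff (j + 1) + legendreCoeff j) k) =
      ((j : ℤ) + 1) • (legendreCoeff (j + 1) - legendreCoeff j) :=
    funext (mul_legendreCoeff_add j)
  rw [coeff] at h
  simpa only [tInt, map_add, map_sub, map_smul, Pi.add_apply, Pi.sub_apply, Pi.smul_apply,
    smul_eq_mul] using h

theorem tInt_sub_second_order (j n : ℕ) :
    ((n : ℤ) + 1) * ((tInt (j + 1) (n + 1) - tInt j (n + 1)) - (tInt (j + 1) n - tInt j n)) +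
        n * ((tInt (j + 1) n - tInt j n) - (tInt (j + 1) (n - 1) - tInt j (n - 1))) =
      2 * (j + 1) * (tInt (j + 1) n + tInt j n) := by
  set kdiff : ℕ → ℤ := fun k => k * (legendreCoeff (j + 1) - legendreCoeff j) k
  have first_order (m : ℕ) : (m : ℤ) * ((tInt (j + 1) m - tInt j m) -
      (tInt (j + 1) (m - 1) - tInt j (m - 1))) = binomTransform kdiff m := by
    have h := mul_binomTransform_sub_pred (legendreCoeff (j + 1) - legendreCoeff j) m
    rwa [map_sub] at h
  have coeff : (fun k => kdiff (k + 1)) =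
      (2 * ((j : ℤ) + 1)) • (legendreCoeff (j + 1) + legendreCoeff j) - (2 : ℤ) • kdiff := by
    funext k
    exact_mod_cast succ_mul_legendreCoeff_sub j k
  have shift : binomTransform kdiff (n + 1) + binomTransform kdiff n =
      2 * (j + 1) * (tInt (j + 1) n + tInt j n) := by
    rw [binomTransform_succ, coeff]
    simp only [map_add, map_sub, map_smul, Pi.add_apply, Pi.sub_apply, Pi.smul_apply, smul_eq_mul,
      tInt]
    ring
  have first_order_succ := first_order (n + 1)
  push_cast [Nat.add_sub_cancel] at first_order_succ
  rw [first_order_succ, first_order, shift]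

end IntegerValues

section PadicContinuity

variable {p : ℕ} [Fact p.Prime]

theorem succ_mul_gbinom_succ (x : ℚ_[p]) (k : ℕ) :
    ((k : ℚ_[p]) + 1) * gbinom x (k + 1) = (x - k) * gbinom x k := by
  have hk : (k : ℚ_[p]) + 1 ≠ 0 := by exact_mod_cast k.succ_ne_zero
  have hfact : (k.factorial : ℚ_[p]) ≠ 0 := by exact_mod_cast k.factorial_ne_zero
  rw [gbinom, gbinom, Finset.prod_range_succ, Nat.factorial_succ]
  push_cast
  field_simp

theorem succ_mul_gbinom_add_one_succ (x : ℚ_[p]) (k : ℕ) :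
    ((k : ℚ_[p]) + 1) * gbinom (x + 1) (k + 1) = (x + 1) * gbinom x k := by
  have hk : (k : ℚ_[p]) + 1 ≠ 0 := by exact_mod_cast k.succ_ne_zero
  have hfact : (k.factorial : ℚ_[p]) ≠ 0 := by exact_mod_cast k.factorial_ne_zero
  rw [gbinom, gbinom, Finset.prod_range_succ', Nat.factorial_succ]
  push_cast
  simp only [add_sub_add_right_eq_sub, sub_zero]
  field_simp

/-- The coefficient `C(x,k) C(x+k,k) 2^k` at a `p`-adic argument `x`, whose binomial transform in
`k` is `t_n(x)`. -/
noncomputable def padicLegendreCoeff (x : ℚ_[p]) (k : ℕ) : ℚ_[p] :=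
  gbinom x k * gbinom (x + (k : ℚ_[p])) k * 2 ^ k

theorem tseq_eq_binomTransform (x : ℚ_[p]) : tseq x = binomTransform (padicLegendreCoeff x) := by
  ext n
  simp only [tseq, binomTransform_apply, padicLegendreCoeff, mul_assoc]

theorem padicLegendreCoeff_zero_right (x : ℚ_[p]) : padicLegendreCoeff x 0 = 1 := by
  simp [padicLegendreCoeff, gbinom]

theorem padicLegendreCoeff_succ_right (x : ℚ_[p]) (k : ℕ) :
    ((k : ℚ_[p]) + 1) ^ 2 * padicLegendreCoeff x (k + 1) =
      2 * (x * (x + 1) - k * (k + 1)) * padicLegendreCoeff x k := by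
  have diagonal := succ_mul_gbinom_add_one_succ (x + (k : ℚ_[p])) k
  rw [add_assoc] at diagonal
  simp only [padicLegendreCoeff, Nat.cast_succ]
  linear_combination
    ((k : ℚ_[p]) + 1) * gbinom (x + ((k : ℚ_[p]) + 1)) (k + 1) * 2 ^ (k + 1) *
        succ_mul_gbinom_succ x k +
      (x - k) * gbinom x k * 2 ^ (k + 1) * diagonal

theorem padicLegendreCoeff_natCast (j k : ℕ) :
    padicLegendreCoeff (j : ℚ_[p]) k = (legendreCoeff j k : ℚ_[p]) := by
  induction k with
  | zero => simp [padicLegendreCoeff_zero_right, legendreCoeff_zero_right]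
  | succ k ih =>
    have hk : ((k : ℚ_[p]) + 1) ^ 2 ≠ 0 := by exact_mod_cast pow_ne_zero 2 k.succ_ne_zero
    refine mul_left_cancel₀ hk ?_
    rw [padicLegendreCoeff_succ_right, ih]
    exact_mod_cast (congrArg (Int.cast (R := ℚ_[p])) (legendreCoeff_succ_right j k)).symm

theorem tseq_natCast (j n : ℕ) : tseq (j : ℚ_[p]) n = (tInt j n : ℚ_[p]) := by
  simp [tseq_eq_binomTransform, tInt, binomTransform_apply, padicLegendreCoeff_natCast]

theorem norm_natCast_eq_one_of_lt {k : ℕ} (hk : k ≠ 0) (hkp : k < p) : ‖(k : ℚ_[p])‖ = 1 :=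
  Padic.norm_natCast_eq_one_iff.2 (Nat.coprime_of_lt_prime hk hkp Fact.out)

theorem norm_mul_add_one_sub_natCast_le_one {x : ℚ_[p]} (hx : ‖x‖ ≤ 1) (k : ℕ) :
    ‖x * (x + 1) - k * (k + 1)‖ ≤ 1 := by
  obtain ⟨z, rfl⟩ : ∃ z : ℤ_[p], (z : ℚ_[p]) = x := ⟨⟨x, hx⟩, rfl⟩
  exact_mod_cast PadicInt.norm_le_one (z * (z + 1) - k * (k + 1) : ℤ_[p])

theorem norm_padicLegendreCoeff_le_one {x : ℚ_[p]} (hx : ‖x‖ ≤ 1) {k : ℕ} (hk : k < p) :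
    ‖padicLegendreCoeff x k‖ ≤ 1 := by
  induction k with
  | zero => simp [padicLegendreCoeff_zero_right]
  | succ k ih =>
    have unit : ‖(k : ℚ_[p]) + 1‖ = 1 := by
      exact_mod_cast norm_natCast_eq_one_of_lt k.succ_ne_zero hk
    have two_le : ‖(2 : ℚ_[p])‖ ≤ 1 := IsUltrametricDist.norm_natCast_le_one ℚ_[p] 2
    have recurrence := congrArg norm (padicLegendreCoeff_succ_right x k)
    rw [norm_mul, norm_pow, unit, one_pow, one_mul, norm_mul, norm_mul] at recurrence
    rw [recurrence]
    exact mul_le_one₀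
      (mul_le_one₀ two_le (norm_nonneg _) (norm_mul_add_one_sub_natCast_le_one hx k))
      (norm_nonneg _) (ih (by lia))

theorem norm_padicLegendreCoeff_sub_le {x y : ℚ_[p]} (hx : ‖x‖ ≤ 1) (hy : ‖y‖ ≤ 1) {k : ℕ}
    (hk : k < p) :
    ‖padicLegendreCoeff x k - padicLegendreCoeff y k‖ ≤ ‖x * (x + 1) - y * (y + 1)‖ := by
  induction k with
  | zero => simp [padicLegendreCoeff_zero_right]
  | succ k ih =>
    have unit : ‖(k : ℚ_[p]) + 1‖ = 1 := by
      exact_mod_cast norm_natCast_eq_one_of_lt k.succ_ne_zero hk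
    have two_le : ‖(2 : ℚ_[p])‖ ≤ 1 := IsUltrametricDist.norm_natCast_le_one ℚ_[p] 2
    have recurrence : ((k : ℚ_[p]) + 1) ^ 2 *
        (padicLegendreCoeff x (k + 1) - padicLegendreCoeff y (k + 1)) =
        2 * ((x * (x + 1) - k * (k + 1)) * (padicLegendreCoeff x k - padicLegendreCoeff y k) +
          padicLegendreCoeff y k * (x * (x + 1) - y * (y + 1))) := by
      linear_combination padicLegendreCoeff_succ_right x k - padicLegendreCoeff_succ_right y k
    have norm_recurrence := congrArg norm recurrence
    rw [norm_mul, norm_pow, unit, one_pow, one_mul, norm_mul] at norm_recurrence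
    rw [norm_recurrence]
    refine (mul_le_of_le_one_left (norm_nonneg _) two_le).trans
      ((Padic.nonarchimedean _ _).trans (max_le ?_ ?_))
    · exact (norm_mul_le_of_le (norm_mul_add_one_sub_natCast_le_one hx k) (ih (by lia))).trans_eq
        (one_mul _)
    · exact (norm_mul_le_of_le (norm_padicLegendreCoeff_le_one hy (by lia)) le_rfl).trans_eq
        (one_mul _)

theorem norm_tseq_le_one {x : ℚ_[p]} (hx : ‖x‖ ≤ 1) {n : ℕ} (hn : n < p) : ‖tseq x n‖ ≤ 1 := by
  rw [tseq_eq_binomTransform]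
  exact norm_binomTransform_le fun k hk => norm_padicLegendreCoeff_le_one hx (hk.trans_lt hn)

theorem norm_tseq_sub_le {x y : ℚ_[p]} (hx : ‖x‖ ≤ 1) (hy : ‖y‖ ≤ 1) {n : ℕ} (hn : n < p) :
    ‖tseq x n - tseq y n‖ ≤ ‖x * (x + 1) - y * (y + 1)‖ := by
  rw [tseq_eq_binomTransform, tseq_eq_binomTransform, ← Pi.sub_apply, ← map_sub]
  exact norm_binomTransform_le fun k hk => norm_padicLegendreCoeff_sub_le hx hy (hk.trans_lt hn)

theorem norm_sum_mul_tseq_sq_sub_le {x y : ℚ_[p]} (hx : ‖x‖ ≤ 1) (hy : ‖y‖ ≤ 1) :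
    ‖∑ n ∈ Finset.range p, ((n : ℚ_[p]) + 1) * tseq x n ^ 2 -
        ∑ n ∈ Finset.range p, ((n : ℚ_[p]) + 1) * tseq y n ^ 2‖ ≤ ‖x * (x + 1) - y * (y + 1)‖ := by
  rw [← Finset.sum_sub_distrib]
  refine IsUltrametricDist.norm_sum_le_of_forall_le_of_nonneg (norm_nonneg _) fun n hn => ?_
  replace hn := Finset.mem_range.1 hn
  have weight_le : ‖(n : ℚ_[p]) + 1‖ ≤ 1 := by
    exact_mod_cast IsUltrametricDist.norm_natCast_le_one ℚ_[p] (n + 1)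
  have sum_le : ‖tseq x n + tseq y n‖ ≤ 1 :=
    (Padic.nonarchimedean _ _).trans (max_le (norm_tseq_le_one hx hn) (norm_tseq_le_one hy hn))
  rw [← mul_sub, sq_sub_sq]
  exact (norm_mul_le_of_le weight_le
    (norm_mul_le_of_le sum_le (norm_tseq_sub_le hx hy hn))).trans_eq (by rw [one_mul, one_mul])

theorem tInt_modEq_of_add_add_one_eq {i j n : ℕ} (hij : i + j + 1 = p) (hn : n < p) :
    tInt i n ≡ tInt j n [ZMOD p] := by
  have integral := IsUltrametricDist.norm_natCast_le_one ℚ_[p]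
  have factor : (j : ℚ_[p]) * (j + 1) - i * (i + 1) = p * ((j : ℤ) - i : ℤ) := by
    have hp : (i : ℚ_[p]) + j + 1 = p := by exact_mod_cast congrArg (Nat.cast (R := ℚ_[p])) hij
    push_cast
    linear_combination ((j : ℚ_[p]) - i) * hp
  have h := norm_tseq_sub_le (integral j) (integral i) hn
  rw [factor, norm_mul, Padic.norm_p, tseq_natCast, tseq_natCast] at h
  have norm_le : ‖((tInt j n - tInt i n : ℤ) : ℚ_[p])‖ ≤ (p : ℝ) ^ (-(1 : ℕ) : ℤ) := by
    push_cast [zpow_neg_one]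
    exact h.trans (mul_le_of_le_one_right (by positivity) (Padic.norm_int_le_one _))
  exact Int.modEq_iff_dvd.2 (by simpa using (Padic.norm_int_le_pow_iff_dvd _ 1).1 norm_le)

end PadicContinuity

section PrimeCongruences

variable {p : ℕ} [Fact p.Prime]

theorem isCoprime_prime_pow_natCast {k : ℕ} (hk : k ≠ 0) (hkp : k < p) (s : ℕ) :
    IsCoprime ((p : ℤ) ^ s) k :=
  (Nat.isCoprime_iff_coprime.2 (Nat.coprime_of_lt_prime hk hkp Fact.out)).pow_left

theorem isCoprime_prime_pow_two (hp2 : p ≠ 2) (s : ℕ) : IsCoprime ((p : ℤ) ^ s) 2 :=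
  isCoprime_prime_pow_natCast two_ne_zero
    ((Fact.out : p.Prime).two_le.lt_of_ne hp2.symm) s

theorem isCoprime_prime_pow_four_mul_succ (hp2 : p ≠ 2) {j : ℕ} (hj : j + 1 < p) (s : ℕ) :
    IsCoprime ((p : ℤ) ^ s) (4 * (j + 1)) := by
  have four := (isCoprime_prime_pow_two hp2 s).mul_right (isCoprime_prime_pow_two hp2 s)
  have succ := isCoprime_prime_pow_natCast j.succ_ne_zero hj s
  rw [Nat.cast_succ] at succ
  exact four.mul_right succ

theorem tInt_self_modEq_one {j : ℕ} (hj : j < p) : tInt j p ≡ 1 [ZMOD p] := by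
  have hp : p.Prime := Fact.out
  obtain ⟨m, rfl⟩ : ∃ m, p = m + 1 := ⟨p - 1, (Nat.sub_add_cancel hp.one_le).symm⟩
  refine (Int.modEq_iff_dvd.2 ?_).symm
  rw [tInt, binomTransform_apply, Finset.sum_range_succ, legendreCoeff_eq_zero_of_lt hj,
    Finset.sum_range_succ', legendreCoeff_zero_right]
  simp only [mul_zero, add_zero, Nat.choose_zero_right, Nat.cast_one, mul_one, add_sub_cancel_right]
  refine Finset.dvd_sum fun k hk => Dvd.dvd.mul_right ?_ _
  exact_mod_cast hp.dvd_choose_self k.succ_ne_zero (Nat.succ_lt_succ (Finset.mem_range.1 hk))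

end PrimeCongruences

section LastArgument

variable {p : ℕ} [Fact p.Prime]

theorem prime_cube_dvd_add_mul_legendreCoeff_pred_sub {k : ℕ} (hk : k < p) :
    (p : ℤ) ^ 3 ∣ (k + p) * legendreCoeff (p - 1) k - p * (-2) ^ k := by
  induction k with
  | zero => simp [legendreCoeff_zero_right]
  | succ k ih =>
    obtain ⟨z, hz⟩ := ih (by lia)
    have recurrence := legendreCoeff_succ_right (p - 1) k
    push_cast [(Fact.out : p.Prime).one_le] at recurrence
    have succ_coprime := isCoprime_prime_pow_natCast k.succ_ne_zero hk 3
    refine (succ_coprime.pow_right (n := 2)).dvd_of_dvd_mul_left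
      ⟨2 * p ^ 2 * z + 2 * (-2) ^ k - 2 * (k + 1) ^ 2 * z, ?_⟩
    push_cast
    linear_combination ((k : ℤ) + 1 + p) * recurrence + (2 * p ^ 2 - 2 * (k + 1) ^ 2 : ℤ) * hz

theorem prime_cube_dvd_mul_tInt_pred_sub_pred {n : ℕ} (hn : n < p) :
    (p : ℤ) ^ 3 ∣ n * (tInt (p - 1) n - tInt (p - 1) (n - 1)) +
      p * tInt (p - 1) n - p * (-1) ^ n := by
  set c := legendreCoeff (p - 1)
  have coeff : (fun k : ℕ => ((k : ℤ) + p) * c k - p * (-2) ^ k) =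
      (fun k : ℕ => (k : ℤ) * c k) + (p : ℤ) • c - (p : ℤ) • fun k => (-2) ^ k := by
    ext k
    simp only [Pi.add_apply, Pi.sub_apply, Pi.smul_apply, smul_eq_mul, add_mul]
  have h := dvd_binomTransform fun k (hk : k ≤ n) =>
    prime_cube_dvd_add_mul_legendreCoeff_pred_sub (hk.trans_lt hn)
  rw [coeff, map_sub, map_add, map_smul, map_smul] at h
  simpa only [tInt, Pi.add_apply, Pi.sub_apply, Pi.smul_apply, smul_eq_mul, binomTransform_pow,
    ← mul_binomTransform_sub_pred, show (-2 : ℤ) + 1 = -1 from rfl] using h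

theorem tInt_pred_modEq_one {n : ℕ} (hn : n < p) : tInt (p - 1) n ≡ 1 [ZMOD p] := by
  rw [← tInt_zero_left n]
  exact tInt_modEq_of_add_add_one_eq (Nat.sub_add_cancel (Fact.out : p.Prime).one_le) hn

/-- The error in the step from `N` to `N + 1` is `p (t_{N+1} - t_N)²`, a multiple of `p³`. -/
theorem prime_cube_dvd_sum_sq_tInt_pred {N : ℕ} (hN : N < p) :
    (p : ℤ) ^ 3 ∣ (2 - 4 * p) * ∑ n ∈ Finset.range (N + 1), tInt (p - 1) n ^ 2 -
      (2 * (N + 1) * tInt (p - 1) N ^ 2 - p * (tInt (p - 1) N + (-1) ^ N) ^ 2) := by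
  induction N with
  | zero =>
    simp only [zero_add, Finset.sum_range_one, tInt_zero_right]
    exact ⟨0, by push_cast; ring⟩
  | succ N ih =>
    obtain ⟨z, hz⟩ := ih (by lia)
    obtain ⟨e, he⟩ := prime_cube_dvd_mul_tInt_pred_sub_pred hN
    obtain ⟨w, hw⟩ := ((tInt_pred_modEq_one (Nat.lt_of_succ_lt hN)).trans
      (tInt_pred_modEq_one hN).symm).dvd
    rw [Nat.add_sub_cancel] at he
    push_cast [pow_succ] at he
    refine ⟨z - 2 * (tInt (p - 1) (N + 1) + tInt (p - 1) N) * e - w ^ 2, ?_⟩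
    rw [Finset.sum_range_succ]
    push_cast [pow_succ (-1 : ℤ)]
    linear_combination hz - 2 * (tInt (p - 1) (N + 1) + tInt (p - 1) N) * he -
      p * (tInt (p - 1) (N + 1) - tInt (p - 1) N + p * w) * hw

end LastArgument

section SumOfSquares

/-- The sum of squares `∑_{n<N} t_n(j)²`. -/
def sumSq (N j : ℕ) : ℤ :=
  ∑ n ∈ Finset.range N, tInt j n ^ 2

/-- The quadratic form in the values at `N` and `N - 1` to which
`4 (j+1) ∑_{n<N} ((2j+3) t_n(j+1)² + (2j+1) t_n(j)²)` telescopes, up to the factor `N²`. -/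
def sumSqBoundary (N j : ℕ) : ℤ :=
  4 * (tInt (j + 1) (N - 1) + tInt j (N - 1)) *
      ((tInt (j + 1) N + tInt j N) - (tInt (j + 1) (N - 1) + tInt j (N - 1))) -
    ((tInt (j + 1) N - tInt j N) - (tInt (j + 1) (N - 1) - tInt j (N - 1))) ^ 2

theorem sumSq_succ_add_sumSq (N j : ℕ) :
    4 * ((j : ℤ) + 1) * ((2 * j + 3) * sumSq N (j + 1) + (2 * j + 1) * sumSq N j) =
      N ^ 2 * sumSqBoundary N j := by
  rw [sumSqBoundary, ← sum_sq_add_sq_telescope (mul_tInt_add_sub_pred j)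
    (tInt_sub_second_order j) N, sumSq, sumSq, Finset.mul_sum, Finset.mul_sum,
    ← Finset.sum_add_distrib]
  congr 1
  exact Finset.sum_congr rfl fun n _ => by ring

/-- The amount by which `(-1)^j (2j+1) ∑_{n<p} t_n(j)²` exceeds `p`, its value at `j = 0`. -/
def sumSqDefect (p j : ℕ) : ℤ :=
  (-1) ^ j * (2 * j + 1) * sumSq p j - p

theorem sumSqDefect_zero_right (p : ℕ) : sumSqDefect p 0 = 0 := by
  simp [sumSqDefect, sumSq, tInt_zero_left]

theorem four_mul_succ_mul_sumSqDefect_sub (p j : ℕ) :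
    4 * ((j : ℤ) + 1) * (sumSqDefect p (j + 1) - sumSqDefect p j) =
      (-1) ^ (j + 1) * (p ^ 2 * sumSqBoundary p j) := by
  rw [← sumSq_succ_add_sumSq, sumSqDefect, sumSqDefect]
  push_cast
  ring

variable {p : ℕ} [Fact p.Prime]

theorem prime_sq_dvd_sumSqDefect_succ_sub (hp2 : p ≠ 2) {j : ℕ} (hj : j + 1 < p) :
    (p : ℤ) ^ 2 ∣ sumSqDefect p (j + 1) - sumSqDefect p j := by
  refine (isCoprime_prime_pow_four_mul_succ hp2 hj 2).dvd_of_dvd_mul_left ?_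
  rw [four_mul_succ_mul_sumSqDefect_sub]
  exact (dvd_mul_right _ _).mul_left _

theorem prime_sq_dvd_sumSqDefect (hp2 : p ≠ 2) {j : ℕ} (hj : j < p) :
    (p : ℤ) ^ 2 ∣ sumSqDefect p j := by
  induction j with
  | zero => simp [sumSqDefect_zero_right]
  | succ j ih =>
    exact (dvd_iff_dvd_of_dvd_sub (prime_sq_dvd_sumSqDefect_succ_sub hp2 hj)).2
      (ih (Nat.lt_of_succ_lt hj))

theorem sumSqBoundary_modEq {j : ℕ} (hj : j + 1 < p) :
    sumSqBoundary p j ≡ 4 * (tInt (j + 1) (p - 1) + tInt j (p - 1)) *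
        (2 - (tInt (j + 1) (p - 1) + tInt j (p - 1))) -
      (tInt (j + 1) (p - 1) - tInt j (p - 1)) ^ 2 [ZMOD p] := by
  have at_succ := tInt_self_modEq_one hj
  have at_self := tInt_self_modEq_one (Nat.lt_of_succ_lt hj)
  have h := (((at_succ.add at_self).sub_right (tInt (j + 1) (p - 1) + tInt j (p - 1))).mul_left
    (4 * (tInt (j + 1) (p - 1) + tInt j (p - 1)))).sub
      (((at_succ.sub at_self).sub_right (tInt (j + 1) (p - 1) - tInt j (p - 1))).pow 2)
  rwa [sub_self, zero_sub, neg_sq, one_add_one_eq_two] at h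

theorem sumSqBoundary_modEq_of_add_add_two_eq {i j : ℕ} (hij : i + j + 2 = p) :
    sumSqBoundary p i ≡ sumSqBoundary p j [ZMOD p] := by
  have succ_left : tInt (i + 1) (p - 1) ≡ tInt j (p - 1) [ZMOD p] :=
    tInt_modEq_of_add_add_one_eq (by lia) (by lia)
  have succ_right : tInt i (p - 1) ≡ tInt (j + 1) (p - 1) [ZMOD p] :=
    tInt_modEq_of_add_add_one_eq (by lia) (by lia)
  have add_modEq := succ_left.add succ_right
  have h := ((add_modEq.mul_left 4).mul (add_modEq.sub_left 2)).sub
    ((succ_left.sub succ_right).pow 2)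
  refine (sumSqBoundary_modEq (by lia)).trans (h.trans ?_)
  have boundary_j := (sumSqBoundary_modEq (show j + 1 < p by lia)).symm
  rwa [add_comm (tInt (j + 1) (p - 1)), sub_sq_comm] at boundary_j

theorem prime_cube_dvd_sumSqDefect_pred (hp2 : p ≠ 2) : (p : ℤ) ^ 3 ∣ sumSqDefect p (p - 1) := by
  have hp : p.Prime := Fact.out
  have even_pred : Even (p - 1) := hp.even_sub_one hp2
  obtain ⟨z, hz⟩ := prime_cube_dvd_sum_sq_tInt_pred (Nat.sub_one_lt hp.ne_zero)
  obtain ⟨w, hw⟩ := (tInt_pred_modEq_one (Nat.sub_one_lt hp.ne_zero)).dvd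
  rw [Nat.sub_add_cancel hp.one_le, ← sumSq] at hz
  refine (isCoprime_prime_pow_two hp2 3).dvd_of_dvd_mul_left ⟨-z - w ^ 2, ?_⟩
  rw [sumSqDefect]
  push_cast [hp.one_le, even_pred.neg_one_pow] at hz ⊢
  linear_combination -hz - p * (1 - tInt (p - 1) (p - 1) + p * w) * hw

theorem prime_cube_dvd_sumSqDefect_sub_sub (hp2 : p ≠ 2) {i j : ℕ} (hij : i + j + 2 = p) :
    (p : ℤ) ^ 3 ∣ (sumSqDefect p (i + 1) - sumSqDefect p i) -
      (sumSqDefect p (j + 1) - sumSqDefect p j) := by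
  obtain ⟨w, hw⟩ := prime_sq_dvd_sumSqDefect_succ_sub hp2 (show j + 1 < p by lia)
  obtain ⟨q, hq⟩ := (sumSqBoundary_modEq_of_add_add_two_eq hij).symm.dvd
  have sign : (-1 : ℤ) ^ (j + 1) = -(-1) ^ (i + 1) := by
    have mul_eq : (-1 : ℤ) ^ (i + 1) * (-1) ^ (j + 1) = -1 := by
      rw [← pow_add, show i + 1 + (j + 1) = p by lia,
        ((Fact.out : p.Prime).odd_of_ne_two hp2).neg_one_pow]
    rcases neg_one_pow_eq_or ℤ (i + 1) with h | h <;> rw [h] at mul_eq ⊢ <;> linarith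
  have defect_i := four_mul_succ_mul_sumSqDefect_sub p i
  have defect_j := four_mul_succ_mul_sumSqDefect_sub p j
  rw [sign] at defect_j
  have hp : (i : ℤ) + j + 2 = p := by exact_mod_cast hij
  refine (isCoprime_prime_pow_four_mul_succ hp2 (show i + 1 < p by lia) 3).dvd_of_dvd_mul_left
    ⟨(-1) ^ (i + 1) * q - 4 * w, ?_⟩
  linear_combination defect_i + defect_j + (-1) ^ (i + 1) * (p : ℤ) ^ 2 * hq -
    4 * (sumSqDefect p (j + 1) - sumSqDefect p j) * hp - 4 * (p : ℤ) * hw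

theorem prime_cube_dvd_sumSqDefect_add (hp2 : p ≠ 2) {i j : ℕ} (hij : i + j + 1 = p) :
    (p : ℤ) ^ 3 ∣ sumSqDefect p i + sumSqDefect p j := by
  induction i generalizing j with
  | zero =>
    obtain rfl : j = p - 1 := by lia
    rw [sumSqDefect_zero_right, zero_add]
    exact prime_cube_dvd_sumSqDefect_pred hp2
  | succ i ih =>
    have regroup : sumSqDefect p (i + 1) + sumSqDefect p j =
        (sumSqDefect p i + sumSqDefect p (j + 1)) +
          ((sumSqDefect p (i + 1) - sumSqDefect p i) -
            (sumSqDefect p (j + 1) - sumSqDefect p j)) := by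
      ring
    rw [regroup]
    exact (ih (by lia)).add (prime_cube_dvd_sumSqDefect_sub_sub hp2 (by lia))

theorem prime_sq_dvd_sumSq_sub_neg_one_pow {r : ℕ} (hr : p = 2 * r + 1) :
    (p : ℤ) ^ 2 ∣ sumSq p r - (-1) ^ r := by
  have hp2 : p ≠ 2 := by lia
  have two_mul_defect := prime_cube_dvd_sumSqDefect_add hp2 (show r + r + 1 = p by lia)
  rw [← two_mul] at two_mul_defect
  obtain ⟨z, hz⟩ := (isCoprime_prime_pow_two hp2 3).dvd_of_dvd_mul_left two_mul_defect
  have hp0 : (p : ℤ) ≠ 0 := by exact_mod_cast (Fact.out : p.Prime).ne_zero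
  refine ⟨(-1) ^ r * z, mul_left_cancel₀ hp0 ?_⟩
  have hp : 2 * (r : ℤ) + 1 = p := by exact_mod_cast hr.symm
  have sign : (-1 : ℤ) ^ r * (-1) ^ r = 1 := by rw [← mul_pow]; norm_num
  rw [sumSqDefect, hp] at hz
  linear_combination (-1) ^ r * hz - p * sumSq p r * sign

end SumOfSquares

section WeightedSum

/-- The weighted sum of squares `∑_{n<N} (8n+5) t_n(j)²`. Its weight is `8(n+1) - 3`, and also
`2(4n + 2 + 2(j+1)²) - (2j+1)(2j+3)`, the form in which both telescoping sums apply to it. -/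
def weightedSumSq (N j : ℕ) : ℤ :=
  ∑ n ∈ Finset.range N, (8 * n + 5) * tInt j n ^ 2

theorem weightedSumSq_zero_right (N : ℕ) : weightedSumSq N 0 = 4 * N ^ 2 + N := by
  simp only [weightedSumSq, tInt_zero_left]
  induction N with
  | zero => simp
  | succ N ih =>
    rw [Finset.sum_range_succ, ih]
    push_cast
    ring

theorem weightedSumSq_succ_sub (N j : ℕ) :
    weightedSumSq N (j + 1) - weightedSumSq N j =
      2 * ∑ n ∈ Finset.range N, (4 * n + 2 + 2 * ((j : ℤ) + 1) ^ 2) *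
          (tInt (j + 1) n ^ 2 - tInt j n ^ 2) -
        (2 * j + 1) * (2 * j + 3) * (sumSq N (j + 1) - sumSq N j) := by
  simp only [weightedSumSq, sumSq, Finset.mul_sum, ← Finset.sum_sub_distrib]
  exact Finset.sum_congr rfl fun n _ => by ring

theorem eight_mul_sum_succ_mul_sq (N j : ℕ) :
    8 * ∑ n ∈ Finset.range N, ((n : ℤ) + 1) * tInt j n ^ 2 = weightedSumSq N j + 3 * sumSq N j := by
  simp only [weightedSumSq, sumSq, Finset.mul_sum, ← Finset.sum_add_distrib]
  exact Finset.sum_congr rfl fun n _ => by ring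

theorem sum_mul_tInt_one_sq_sub_tInt_zero_sq (N : ℕ) :
    ∑ n ∈ Finset.range N, (4 * n + 4) * (tInt 1 n ^ 2 - tInt 0 n ^ 2) =
      16 * (N : ℤ) ^ 2 * (N ^ 2 - 1) := by
  simp only [tInt_one_left, tInt_zero_left]
  induction N with
  | zero => simp
  | succ N ih =>
    rw [Finset.sum_range_succ, ih]
    push_cast
    ring

variable {p : ℕ} [Fact p.Prime]

theorem prime_sq_dvd_sum_mul_sq_sub_sq (hp2 : p ≠ 2) {j : ℕ} (hj : j + 2 < p) :
    (p : ℤ) ^ 2 ∣ ∑ n ∈ Finset.range p, (4 * n + 2 + 2 * ((j : ℤ) + 1) ^ 2) *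
      (tInt (j + 1) n ^ 2 - tInt j n ^ 2) := by
  rcases eq_or_ne j 0 with rfl | hj0
  · have weight (n : ℕ) : 4 * (n : ℤ) + 2 + 2 * ((0 : ℕ) + 1) ^ 2 = 4 * n + 4 := by
      push_cast
      ring
    simp only [weight, zero_add, sum_mul_tInt_one_sq_sub_tInt_zero_sq, mul_assoc]
    exact (dvd_mul_right _ _).mul_left _
  have four_mul_succ := isCoprime_prime_pow_four_mul_succ hp2 (Nat.lt_of_succ_lt hj) 2
  have mul_add_two := (isCoprime_prime_pow_natCast hj0 (by lia) 2).mul_right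
    (isCoprime_prime_pow_natCast (j + 1).succ_ne_zero hj 2)
  refine (four_mul_succ.mul_right mul_add_two).dvd_of_dvd_mul_left ?_
  have telescope := sum_mul_telescope (mul_tInt_add_sub_pred j) (tInt_sub_second_order j) p
  have factor : 4 * ((j : ℤ) + 1) * (j * (j + 1 + 1 : ℕ)) =
      4 * (j + 1) * ((j + 1) ^ 2 - 1) := by
    push_cast
    ring
  simp only [sq_sub_sq]
  rw [factor, telescope]
  exact dvd_mul_right _ _

theorem prime_sq_dvd_weightedSumSq_sub (hp2 : p ≠ 2) {j : ℕ} (hj : j + 1 < p) :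
    (p : ℤ) ^ 2 ∣ weightedSumSq p j - (2 - (-1) ^ j * (2 * j + 1)) * p := by
  induction j with
  | zero => exact ⟨4, by rw [weightedSumSq_zero_right]; push_cast; ring⟩
  | succ j ih =>
    obtain ⟨z, hz⟩ := ih (by lia)
    obtain ⟨w, hw⟩ := prime_sq_dvd_sum_mul_sq_sub_sq hp2 hj
    obtain ⟨a, ha⟩ := prime_sq_dvd_sumSqDefect hp2 (show j < p by lia)
    obtain ⟨b, hb⟩ := prime_sq_dvd_sumSqDefect hp2 (Nat.lt_of_succ_lt hj)
    have step := weightedSumSq_succ_sub p j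
    have sign : (-1 : ℤ) ^ j * (-1) ^ j = 1 := by rw [← mul_pow]; norm_num
    rw [hw] at step
    rw [sumSqDefect] at ha hb
    push_cast [pow_succ] at hb ⊢
    refine ⟨z + 2 * w + (-1) ^ j * ((2 * j + 3) * a + (2 * j + 1) * b), ?_⟩
    linear_combination hz + step + (-1) ^ j * (2 * j + 3) * ha + (-1) ^ j * (2 * j + 1) * hb +
      (2 * j + 1) * (2 * j + 3) * (sumSq p (j + 1) - sumSq p j) * sign

theorem prime_sq_dvd_eight_mul_sum_sub {r : ℕ} (hr : p = 2 * r + 1) :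
    (p : ℤ) ^ 2 ∣ 8 * ∑ n ∈ Finset.range p, ((n : ℤ) + 1) * tInt r n ^ 2 -
      (2 * p + 3 * (-1) ^ r) := by
  have hp_lt := (Fact.out : p.Prime).one_lt
  obtain ⟨v, hv⟩ := prime_sq_dvd_weightedSumSq_sub (by lia) (show r + 1 < p by lia)
  obtain ⟨s, hs⟩ := prime_sq_dvd_sumSq_sub_neg_one_pow hr
  have hp : 2 * (r : ℤ) + 1 = p := by exact_mod_cast hr.symm
  rw [hp] at hv
  refine ⟨v + 3 * s - (-1) ^ r, ?_⟩
  rw [eight_mul_sum_succ_mul_sq]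
  linear_combination hv + 3 * hs

end WeightedSum

section HalfArgument

variable {p : ℕ} [Fact p.Prime]

theorem norm_two_eq_one (hp2 : p ≠ 2) : ‖(2 : ℚ_[p])‖ = 1 :=
  norm_natCast_eq_one_of_lt two_ne_zero ((Fact.out : p.Prime).two_le.lt_of_ne hp2.symm)

theorem norm_mul_add_one_sub_half_le {r : ℕ} (hr : p = 2 * r + 1) {x : ℚ_[p]}
    (h2x : ‖2 * x + 1‖ ≤ (p : ℝ)⁻¹) :
    ‖x * (x + 1) - r * (r + 1)‖ ≤ (p : ℝ) ^ (-2 : ℤ) := by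
  have hp : (p : ℚ_[p]) = 2 * r + 1 := by exact_mod_cast congrArg (Nat.cast (R := ℚ_[p])) hr
  have complete_square : (2 : ℚ_[p]) ^ 2 * (x * (x + 1) - r * (r + 1)) =
      (2 * x + 1) * (2 * x + 1) + -(p * p : ℚ_[p]) := by
    linear_combination (p + 2 * r + 1 : ℚ_[p]) * hp
  have norm_eq := congrArg norm complete_square
  rw [norm_mul, norm_pow, norm_two_eq_one (by lia), one_pow, one_mul] at norm_eq
  rw [norm_eq, zpow_neg, zpow_ofNat, sq, mul_inv]
  refine (Padic.nonarchimedean _ _).trans (max_le (norm_mul_le_of_le h2x h2x) ?_)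
  rw [norm_neg, norm_mul, Padic.norm_p]

theorem norm_sum_mul_tseq_half_sq_sub_le {r : ℕ} (hr : p = 2 * r + 1) :
    ‖∑ n ∈ Finset.range p, ((n : ℚ_[p]) + 1) * tseq (r : ℚ_[p]) n ^ 2 -
      ((p : ℚ_[p]) / 4 + 3 / 8 * (-1) ^ r)‖ ≤ (p : ℝ) ^ (-2 : ℤ) := by
  set numerator : ℤ := 8 * ∑ n ∈ Finset.range p, ((n : ℤ) + 1) * tInt r n ^ 2 -
    (2 * p + 3 * (-1) ^ r) with numerator_def
  have clear_denominators : (2 : ℚ_[p]) ^ 3 * (∑ n ∈ Finset.range p, ((n : ℚ_[p]) + 1) *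
      tseq (r : ℚ_[p]) n ^ 2 - (p / 4 + 3 / 8 * (-1) ^ r)) = numerator := by
    simp only [tseq_natCast, numerator_def]
    push_cast
    ring
  have norm_eq := congrArg norm clear_denominators
  rw [norm_mul, norm_pow, norm_two_eq_one (by lia), one_pow, one_mul] at norm_eq
  rw [norm_eq]
  exact (Padic.norm_int_le_pow_iff_dvd numerator 2).2 (prime_sq_dvd_eight_mul_sum_sub hr)

end HalfArgument

theorem stmt_16 (p : ℕ) [Fact p.Prime] (hp : p ≠ 2) (x : ℚ_[p]) (hx : ‖x‖ ≤ 1)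
    (h2x : ‖2*x + 1‖ ≤ (p : ℝ)⁻¹) :
    ‖(∑ n ∈ Finset.range p, ((n : ℚ_[p]) + 1) * (tseq x n)^2) -
        ((p : ℚ_[p])/4 + (3/8) * (-1)^((p-1)/2))‖ ≤ (p : ℝ) ^ (-2 : ℤ) := by
  obtain ⟨r, hr⟩ := (Fact.out : p.Prime).odd_of_ne_two hp
  have half : (p - 1) / 2 = r := by lia
  have move_to_half := (norm_sum_mul_tseq_sq_sub_le hx
    (IsUltrametricDist.norm_natCast_le_one ℚ_[p] r)).trans (norm_mul_add_one_sub_half_le hr h2x)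
  rw [half, ← sub_add_sub_cancel _
    (∑ n ∈ Finset.range p, ((n : ℚ_[p]) + 1) * tseq (r : ℚ_[p]) n ^ 2)]
  exact (Padic.nonarchimedean _ _).trans
    (max_le move_to_half (norm_sum_mul_tseq_half_sq_sub_le hr))
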